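/- arXiv:1302.1038 — 12 statements merged into one kernel-verified Lean document; each statement's English description precedes it below -/
import Mathlib

section
/- Under the ladder system, for all n ≥ 0 one has a_n² = qⁿ(1 - qⁿ + r_n)/k₂. -/
/-- Under the ladder system, for all n ≥ 0 one has a_n² = qⁿ(1 - qⁿ + r_n)/k₂. -/
theorem ladder_an_sq (q k₁ k₂ k₃ : ℝ) (a b r R : ℕ → ℝ)
    (hq0 : 0 < q) (hq1 : q < 1)
    (hk1 : k₁ ≠ 0) (hk2 : k₂ ≠ 0)
    (ha0 : a 0 = 0) (hr0 : r 0 = 0)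
    (hcomp1 : ∀ n : ℕ, r (n + 1) + r n = -(b n * R n) - k₁)
    (hcomp2 : ∀ n : ℕ,
      R n - k₂ * b n / q ^ n - k₃ - (1 - q) * ∑ j ∈ Finset.range (n + 1), R j = 0)
    (hcomp30 : a 1 ^ 2 * R 1 = -(b 0 * (r 1 - r 0)))
    (hcomp3 : ∀ n : ℕ,
      a (n + 2) ^ 2 * R (n + 2) - a (n + 1) ^ 2 * R n =
        -(b (n + 1) * (r (n + 2) - r (n + 1))))
    (hcomp4 : ∀ n : ℕ,
      k₂ * a (n + 1) ^ 2 - k₂ * q ^ 2 * a n ^ 2 =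
        q ^ (1 + n) - q ^ (2 + n) - q ^ (2 + n) * r n + q ^ (1 + n) * r (n + 1)) :
    ∀ n : ℕ, a n ^ 2 = q ^ n * (1 - q ^ n + r n) / k₂ := by
  intro n
  induction n with
  | zero => simp [ha0, hr0]
  | succ n ih =>
    rw [eq_div_iff hk2] at ih ⊢
    have h := hcomp4 n
    have e1 : q ^ (1 + n) = q * q ^ n := by ring
    have e2 : q ^ (2 + n) = q ^ 2 * q ^ n := by ring
    have e3 : q ^ (n + 1) = q * q ^ n := by ring
    rw [e1, e2] at h
    rw [e3]
    linear_combination h + q ^ 2 * ih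
end

section
/- Under the ladder system, for all n ≥ 1 one has a_n² R_n R_{n-1} = r_n(k₁ + r_n). -/
/-- Under the ladder system, for all n ≥ 1 one has a_n² R_n R_{n-1} = r_n(k₁ + r_n). -/
theorem ladder_an_sq_Rn_Rnm1 (q k₁ k₂ k₃ : ℝ) (a b r R : ℕ → ℝ)
    (hq0 : 0 < q) (hq1 : q < 1)
    (hk1 : k₁ ≠ 0) (hk2 : k₂ ≠ 0)
    (ha0 : a 0 = 0) (hr0 : r 0 = 0)
    (hcomp1 : ∀ n : ℕ, r (n + 1) + r n = -(b n * R n) - k₁)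
    (hcomp2 : ∀ n : ℕ,
      R n - k₂ * b n / q ^ n - k₃ - (1 - q) * ∑ j ∈ Finset.range (n + 1), R j = 0)
    (hcomp30 : a 1 ^ 2 * R 1 = -(b 0 * (r 1 - r 0)))
    (hcomp3 : ∀ n : ℕ,
      a (n + 2) ^ 2 * R (n + 2) - a (n + 1) ^ 2 * R n =
        -(b (n + 1) * (r (n + 2) - r (n + 1))))
    (hcomp4 : ∀ n : ℕ,
      k₂ * a (n + 1) ^ 2 - k₂ * q ^ 2 * a n ^ 2 =
        q ^ (1 + n) - q ^ (2 + n) - q ^ (2 + n) * r n + q ^ (1 + n) * r (n + 1)) :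
    ∀ n : ℕ, a (n + 1) ^ 2 * R (n + 1) * R n = r (n + 1) * (k₁ + r (n + 1)) := by
  intro n
  induction n with
  | zero =>
    have h := hcomp1 0
    simp only [zero_add] at h ⊢
    rw [hr0] at h hcomp30
    linear_combination R 0 * hcomp30 - r 1 * h
  | succ n ih =>
    linear_combination R (n + 1) * hcomp3 n + ih - (r (n + 2) - r (n + 1)) * hcomp1 (n + 1)
end

section
/- Under the ladder system, for every n ≥ 1 such that 1 - qⁿ + r_n ≠ 0, one has the quadratic relation R_n² - k₃ q^{-n-1} R_n = -k₂ q^{-2n-1}((1 + r_n)(1 + r_{n+1}) - (1 - k₁)). -/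
/-- Under the ladder system, for every n ≥ 1 with 1 - qⁿ + r_n ≠ 0,
R_n² - k₃ q^{-n-1} R_n = -k₂ q^{-2n-1}((1 + r_n)(1 + r_{n+1}) - (1 - k₁)). -/
theorem ladder_quadratic_Rn (q k₁ k₂ k₃ : ℝ) (a b r R : ℕ → ℝ)
    (hq0 : 0 < q) (hq1 : q < 1)
    (hk1 : k₁ ≠ 0) (hk2 : k₂ ≠ 0)
    (ha0 : a 0 = 0) (hr0 : r 0 = 0)
    (hcomp1 : ∀ n : ℕ, r (n + 1) + r n = -(b n * R n) - k₁)
    (hcomp2 : ∀ n : ℕ,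
      R n - k₂ * b n / q ^ n - k₃ - (1 - q) * ∑ j ∈ Finset.range (n + 1), R j = 0)
    (hcomp30 : a 1 ^ 2 * R 1 = -(b 0 * (r 1 - r 0)))
    (hcomp3 : ∀ n : ℕ,
      a (n + 2) ^ 2 * R (n + 2) - a (n + 1) ^ 2 * R n =
        -(b (n + 1) * (r (n + 2) - r (n + 1))))
    (hcomp4 : ∀ n : ℕ,
      k₂ * a (n + 1) ^ 2 - k₂ * q ^ 2 * a n ^ 2 =
        q ^ (1 + n) - q ^ (2 + n) - q ^ (2 + n) * r n + q ^ (1 + n) * r (n + 1)) :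
    ∀ n : ℕ, 1 - q ^ (n + 1) + r (n + 1) ≠ 0 →
      R (n + 1) ^ 2 - k₃ * R (n + 1) / q ^ (n + 2) =
        -(k₂ / q ^ (2 * n + 3)) *
          ((1 + r (n + 1)) * (1 + r (n + 2)) - (1 - k₁)) := by
  have hA : ∀ n : ℕ, k₂ * a n ^ 2 = q ^ n * (1 - q ^ n + r n) := by
    intro n
    induction n with
    | zero => simp [ha0, hr0]
    | succ n ih =>
      have h := hcomp4 n
      have e1 : q ^ (1 + n) = q * q ^ n := by ring
      have e2 : q ^ (2 + n) = q ^ 2 * q ^ n := by ring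
      rw [e1, e2] at h
      rw [pow_succ q n]
      linear_combination h + q ^ 2 * ih
  have hT : ∀ n : ℕ, a (n + 1) ^ 2 * R (n + 1) * R n = r (n + 1) ^ 2 + k₁ * r (n + 1) := by
    intro n
    induction n with
    | zero =>
      have h1 := hcomp1 0
      simp only [zero_add, hr0] at h1 hcomp30 ⊢
      linear_combination R 0 * hcomp30 - r 1 * h1
    | succ n ih =>
      have h1 := hcomp1 (n + 1)
      have h3 := hcomp3 n
      simp only [add_assoc, Nat.reduceAdd] at h1 h3 ih ⊢
      linear_combination R (n + 1) * h3 + ih - (r (n + 2) - r (n + 1)) * h1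
  have hB : ∀ n : ℕ, q ^ (n + 1) * (q * R (n + 1) - R n) = k₂ * (b (n + 1) - q * b n) := by
    intro n
    have h1 := hcomp2 n
    have h2 := hcomp2 (n + 1)
    rw [Finset.sum_range_succ] at h2
    have hqn : q ^ n ≠ 0 := (pow_pos hq0 n).ne'
    have hqn' : q ^ (n + 1) ≠ 0 := (pow_pos hq0 _).ne'
    have hc : k₂ * b (n + 1) / q ^ (n + 1) * q ^ (n + 1) = k₂ * b (n + 1) :=
      div_mul_cancel₀ _ hqn'
    have hd : k₂ * b n / q ^ n * q ^ n = k₂ * b n := div_mul_cancel₀ _ hqn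
    have e1 : q ^ (n + 1) = q * q ^ n := by ring
    linear_combination q ^ (n + 1) * (h2 - h1) + hc - q * hd - (k₂ * b n / q ^ n) * e1
  have step : ∀ n : ℕ, q ^ (2 * n + 1) * R n - k₃ * q ^ n - k₂ * (1 + r (n + 1)) * b n
        - k₂ * a (n + 1) ^ 2 * R (n + 1) = 0 →
      q ^ (2 * n + 3) * R (n + 1) - k₃ * q ^ (n + 1) - k₂ * (1 + r (n + 1)) * b (n + 1)
        - k₂ * a (n + 1) ^ 2 * R n = 0 := by
    intro n h
    have hb := hB n
    rw [hA] at h ⊢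
    linear_combination q * h + (1 + r (n + 1)) * hb
  have hV' : ∀ n : ℕ, q ^ (2 * n + 1) * R n - k₃ * q ^ n - k₂ * (1 + r (n + 1)) * b n
        - k₂ * a (n + 1) ^ 2 * R (n + 1) = 0 := by
    intro n
    induction n with
    | zero =>
      have h2 := hcomp2 0
      simp [hr0] at h2 hcomp30 ⊢
      linear_combination h2 - k₂ * hcomp30
    | succ n ih =>
      have h := step n ih
      have h3 := hcomp3 n
      simp only [add_assoc, Nat.reduceAdd] at h h3 ⊢
      linear_combination h - k₂ * h3
  intro n _
  have hV := step n (hV' n)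
  have h1 := hcomp1 (n + 1)
  have ht := hT n
  simp only [add_assoc, Nat.reduceAdd] at h1
  have hq : q ≠ 0 := hq0.ne'
  have key : q ^ (2 * n + 3) * R (n + 1) ^ 2 - k₃ * q ^ (n + 1) * R (n + 1) =
      -k₂ * ((1 + r (n + 1)) * (1 + r (n + 2)) - (1 - k₁)) := by
    linear_combination R (n + 1) * hV + k₂ * ht + k₂ * (1 + r (n + 1)) * h1
  have hp : q ^ (2 * n + 3) ≠ 0 := pow_ne_zero _ hq
  have e : k₃ * R (n + 1) / q ^ (n + 2) = k₃ * q ^ (n + 1) * R (n + 1) / q ^ (2 * n + 3) := by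
    rw [div_eq_div_iff (pow_ne_zero _ hq) hp]; ring
  rw [e]
  field_simp
  linear_combination key
end

section
/- Under the ladder system, for every n ≥ 1 satisfying the nondegeneracy conditions, one has (in cleared-denominator form) R_n² (qⁿ - 1 - r_n)(r_{n-1}(qⁿ - 1 - r_n) + (qⁿ - 1)(r_n + k₁)) = -k₂ q^{-1-n} r_n (r_n + k₁)(r_n(qⁿ - 1 - r_{n+1}) + (qⁿ - 1)(r_{n+1} + k₁)). -/
/-- Under the ladder system, for every n ≥ 1 satisfying the nondegeneracy conditions,
in cleared-denominator form,
R_n² (qⁿ-1-r_n)(r_{n-1}(qⁿ-1-r_n)+(qⁿ-1)(r_n+k₁)) =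
  -k₂ q^{-1-n} r_n (r_n+k₁)(r_n(qⁿ-1-r_{n+1})+(qⁿ-1)(r_{n+1}+k₁)). -/
theorem ladder_Rn_sq (q k₁ k₂ k₃ : ℝ) (a b r R : ℕ → ℝ)
    (hq0 : 0 < q) (hq1 : q < 1)
    (hk1 : k₁ ≠ 0) (hk2 : k₂ ≠ 0)
    (ha0 : a 0 = 0) (hr0 : r 0 = 0)
    (hcomp1 : ∀ n : ℕ, r (n + 1) + r n = -(b n * R n) - k₁)
    (hcomp2 : ∀ n : ℕ,
      R n - k₂ * b n / q ^ n - k₃ - (1 - q) * ∑ j ∈ Finset.range (n + 1), R j = 0)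
    (hcomp30 : a 1 ^ 2 * R 1 = -(b 0 * (r 1 - r 0)))
    (hcomp3 : ∀ n : ℕ,
      a (n + 2) ^ 2 * R (n + 2) - a (n + 1) ^ 2 * R n =
        -(b (n + 1) * (r (n + 2) - r (n + 1))))
    (hcomp4 : ∀ n : ℕ,
      k₂ * a (n + 1) ^ 2 - k₂ * q ^ 2 * a n ^ 2 =
        q ^ (1 + n) - q ^ (2 + n) - q ^ (2 + n) * r n + q ^ (1 + n) * r (n + 1)) :
    ∀ n : ℕ, R (n + 1) ≠ 0 → R n ≠ 0 →
      1 - q ^ (n + 1) + r (n + 1) ≠ 0 → 1 - q ^ (n + 2) + r (n + 2) ≠ 0 →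
      R (n + 1) ^ 2 * (q ^ (n + 1) - 1 - r (n + 1)) *
          (r n * (q ^ (n + 1) - 1 - r (n + 1)) + (q ^ (n + 1) - 1) * (r (n + 1) + k₁)) =
        -(k₂ / q ^ (n + 2)) * r (n + 1) * (r (n + 1) + k₁) *
          (r (n + 1) * (q ^ (n + 1) - 1 - r (n + 2)) +
            (q ^ (n + 1) - 1) * (r (n + 2) + k₁)) := by
  have hA : ∀ n : ℕ, a (n + 1) ^ 2 * R (n + 1) * R n = r (n + 1) * (r (n + 1) + k₁) := by
    intro n
    induction n with
    | zero =>
      have h1 := hcomp1 0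
      simp only [zero_add, hr0] at h1 hcomp30 ⊢
      linear_combination R 0 * hcomp30 - r 1 * h1
    | succ m ih =>
      linear_combination ih + R (m + 1) * hcomp3 m - (r (m + 2) - r (m + 1)) * hcomp1 (m + 1)
  have hB : ∀ n : ℕ, k₂ * a n ^ 2 = q ^ n * (1 - q ^ n + r n) := by
    intro n
    induction n with
    | zero => simp [ha0, hr0]
    | succ m ih =>
      have h4 := hcomp4 m
      rw [pow_add q 1 m, pow_add q 2 m] at h4
      rw [pow_succ q m]
      linear_combination h4 + q ^ 2 * ih
  intro n hR1 hR0 hD1 _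
  have hA' := hA n
  have hB' := hB (n + 1)
  have h1 := hcomp1 n
  have h1' := hcomp1 (n + 1)
  have h2 := hcomp2 n
  have h2' := hcomp2 (n + 1)
  rw [Finset.sum_range_succ _ (n + 1)] at h2'
  have hQ : q ^ n ≠ 0 := (pow_pos hq0 n).ne'
  have hq : q ≠ 0 := hq0.ne'
  have e1 : q ^ (n + 1) = q ^ n * q := pow_succ q n
  have e2 : q ^ (n + 2) = q ^ n * q * q := by rw [pow_succ, pow_succ]
  rw [e1] at hB' h2' hD1
  rw [e1, e2]
  generalize q ^ n = Q at *
  generalize ∑ j ∈ Finset.range (n + 1), R j = S at *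
  have h3 : (q * R (n + 1) - R n) * (Q * q) = k₂ * (b (n + 1) - q * b n) := by
    field_simp at h2 h2'
    linear_combination h2' - q * h2
  generalize R (n + 1) = R1 at *
  generalize r (n + 1 + 1) = r2 at *
  generalize r (n + 1) = r1 at *
  generalize a (n + 1) = A at *
  generalize b (n + 1) = b1 at *
  have hP : k₂ * (r1 * (r1 + k₁)) = Q * q * (1 - Q * q + r1) * (R1 * R n) := by
    linear_combination -k₂ * hA' + R1 * R n * hB'
  have h5 : q * R1 * (r1 * (r1 + k₁) - (1 - Q * q + r1) * (r1 + r n + k₁))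
      = R n * (r1 * (r1 + k₁) - (1 - Q * q + r1) * (r2 + r1 + k₁)) := by
    apply mul_left_cancel₀ hk2
    linear_combination (q * R1 - R n) * hP + (1 - Q * q + r1) * R1 * R n * h3
      + (1 - Q * q + r1) * k₂ * (R n * h1' - q * R1 * h1)
  field_simp
  linear_combination (-(1 - Q * q + r1) * R1 * Q * q) * h5
    + (r1 * (r1 + k₁) - (1 - Q * q + r1) * (r2 + r1 + k₁)) * hP
end

section
/- (Theorem 1) Under the ladder system, for every n ≥ 1 satisfying the nondegeneracy conditions and such that D_n := r_{n-1}(qⁿ - 1 - r_n) + (qⁿ - 1)(r_n + k₁) ≠ 0, define f_n = -k₂ q^{-1-n} r_n (r_n + k₁)(r_n(qⁿ - 1 - r_{n+1}) + (qⁿ - 1)(r_{n+1} + k₁)) / ((qⁿ - 1 - r_n) D_n) and g_n = -k₂ q^{-2n-1}((1 + r_n)(1 + r_{n+1}) - (1 - k₁)). Then f_n² - 2 f_n g_n + g_n² - k₃² q^{-2n-2} f_n = 0. -/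
/-- Theorem 1: the second order second degree discrete equation
f² - 2fg + g² - k₃² q^{-2n-2} f = 0 for the quantities f, g built from r_n. -/
theorem ladder_second_degree_equation (q k₁ k₂ k₃ : ℝ) (a b r R : ℕ → ℝ)
    (hq0 : 0 < q) (hq1 : q < 1)
    (hk1 : k₁ ≠ 0) (hk2 : k₂ ≠ 0)
    (ha0 : a 0 = 0) (hr0 : r 0 = 0)
    (hcomp1 : ∀ n : ℕ, r (n + 1) + r n = -(b n * R n) - k₁)
    (hcomp2 : ∀ n : ℕ,
      R n - k₂ * b n / q ^ n - k₃ - (1 - q) * ∑ j ∈ Finset.range (n + 1), R j = 0)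
    (hcomp30 : a 1 ^ 2 * R 1 = -(b 0 * (r 1 - r 0)))
    (hcomp3 : ∀ n : ℕ,
      a (n + 2) ^ 2 * R (n + 2) - a (n + 1) ^ 2 * R n =
        -(b (n + 1) * (r (n + 2) - r (n + 1))))
    (hcomp4 : ∀ n : ℕ,
      k₂ * a (n + 1) ^ 2 - k₂ * q ^ 2 * a n ^ 2 =
        q ^ (1 + n) - q ^ (2 + n) - q ^ (2 + n) * r n + q ^ (1 + n) * r (n + 1)) :
    ∀ n : ℕ, R (n + 1) ≠ 0 → R n ≠ 0 →
      1 - q ^ (n + 1) + r (n + 1) ≠ 0 → 1 - q ^ (n + 2) + r (n + 2) ≠ 0 →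
      ∀ D f g : ℝ,
        D = r n * (q ^ (n + 1) - 1 - r (n + 1)) + (q ^ (n + 1) - 1) * (r (n + 1) + k₁) →
        D ≠ 0 →
        f = -(k₂ / q ^ (n + 2)) * r (n + 1) * (r (n + 1) + k₁) *
              (r (n + 1) * (q ^ (n + 1) - 1 - r (n + 2)) +
                (q ^ (n + 1) - 1) * (r (n + 2) + k₁)) /
              ((q ^ (n + 1) - 1 - r (n + 1)) * D) →
        g = -(k₂ / q ^ (2 * n + 3)) * ((1 + r (n + 1)) * (1 + r (n + 2)) - (1 - k₁)) →
        f ^ 2 - 2 * f * g + g ^ 2 - k₃ ^ 2 / q ^ (2 * n + 4) * f = 0 := by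
  have hP : ∀ n : ℕ, q ^ n ≠ 0 := fun n => pow_ne_zero n hq0.ne'
  have hqne : q ≠ 0 := hq0.ne'
  obtain ⟨c, hc⟩ : ∃ c : ℕ → ℝ, ∀ n, c n = k₂ * b n / q ^ n := ⟨_, fun _ => rfl⟩
  have hcb : ∀ n, k₂ * b n = q ^ n * c n := by
    intro n
    rw [hc, mul_div_cancel₀ _ (hP n)]
  have hdiff : ∀ n, q * R (n + 1) - R n - c (n + 1) + c n = 0 := by
    intro n
    have h1 := hcomp2 n
    have h2 := hcomp2 (n + 1)
    rw [← hc] at h1 h2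
    rw [Finset.sum_range_succ] at h2
    linear_combination h2 - h1
  have hB : ∀ n, k₂ * a n ^ 2 = q ^ n * (1 - q ^ n + r n) := by
    intro n
    induction n with
    | zero => simp [ha0, hr0]
    | succ n ih =>
      have h := hcomp4 n
      linear_combination (exp := 1) h + q ^ 2 * ih
  have hA : ∀ n, a (n + 1) ^ 2 * R (n + 1) * R n = r (n + 1) * (r (n + 1) + k₁) := by
    intro n
    induction n with
    | zero =>
      have h := hcomp1 0
      simp only [zero_add, hr0] at *
      linear_combination R 0 * hcomp30 + r 1 * (-h)
    | succ n ih =>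
      have h := hcomp1 (n + 1)
      have h3 := hcomp3 n
      linear_combination R (n + 1) * h3 + ih - (r (n + 2) - r (n + 1)) * h
  have hE : ∀ n, (R n - c n) * (1 + r (n + 1)) - k₃
      = (1 - q ^ (n + 1) + r (n + 1)) * (q * R (n + 1) + R n) := by
    intro n
    induction n with
    | zero =>
      have h2 := hcomp2 0
      rw [← hc] at h2
      have hb := hcb 0
      have h4 := hB 1
      simp only [zero_add, hr0, pow_zero, pow_one, Finset.sum_range_one] at *
      linear_combination h2 + R 1 * h4 - k₂ * hcomp30 + r 1 * hb
    | succ n ih =>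
      have h3 := hcomp3 n
      have hb := hcb (n + 1)
      have h4 := hB (n + 1)
      have h5 := hB (n + 2)
      have hd := hdiff n
      apply mul_left_cancel₀ (hP (n + 1))
      rw [show q ^ (n + 2) = q * q ^ (n + 1) by ring] at h5
      rw [show q ^ (n + 1 + 1) = q * q ^ (n + 1) by ring]
      generalize q ^ (n + 1) = p at *
      linear_combination p * ih + R (n + 2) * h5 - R n * h4 - k₂ * h3
        + (r (n + 2) - r (n + 1)) * hb + p * (1 + r (n + 1)) * hd
  intro n hX hY hs hv D f g hD hD0 hf hg
  have e1 := hE n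
  have e2 := hA n
  have e3 := hB (n + 1)
  have e4 := hdiff n
  have e5 := hcb (n + 1)
  have e6 := hcb n
  have e7 := hcomp1 n
  have e8 := hcomp1 (n + 1)
  have hp := hP (n + 1)
  have e6' : q * (k₂ * b n) = q ^ (n + 1) * c n := by rw [e6]; ring
  rw [show q ^ (n + 2) = q * q ^ (n + 1) by ring] at hf
  rw [show q ^ (2 * n + 3) = q * (q ^ (n + 1)) ^ 2 by ring] at hg
  rw [show q ^ (2 * n + 4) = q ^ 2 * (q ^ (n + 1)) ^ 2 by ring]
  rw [show n + 1 + 1 = n + 2 from rfl] at e8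
  clear hv e6 hE hA hB hdiff hcb hc hcomp1 hcomp2 hcomp3 hcomp30 hcomp4 hP
  generalize q ^ (n + 1) = p at *
  generalize r (n + 2) = v at *
  generalize r (n + 1) = s at *
  generalize r n = u at *
  generalize R (n + 1) = X at *
  generalize R n = Y at *
  generalize a (n + 1) = α at *
  generalize b (n + 1) = β at *
  generalize b n = γ at *
  generalize c (n + 1) = C at *
  generalize c n = C' at *
  -- factorisations of the two brackets
  have hss : k₂ * (s * (s + k₁)) = p * (1 - p + s) * X * Y := by
    linear_combination X * Y * e3 - k₂ * e2
  have hN : k₂ * (s * (p - 1 - v) + (p - 1) * (v + k₁))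
      = (1 - p + s) * X * (p * C + p * Y) := by
    linear_combination k₂ * (p - 1 - s) * e8 + hss + (1 - p + s) * X * e5
  have hDD : q * (k₂ * D) = (1 - p + s) * Y * (p * C' + q * p * X) := by
    rw [hD]
    linear_combination q * k₂ * (p - 1 - s) * e7 + q * hss + (1 - p + s) * Y * e6'
  have hND : (s * (p - 1 - v) + (p - 1) * (v + k₁)) * Y = q * D * X := by
    apply mul_left_cancel₀ hk2
    linear_combination Y * hN - X * hDD - (1 - p + s) * X * Y * p * e4
  have hf2 : f = X ^ 2 := by
    have hs' : p - 1 - s ≠ 0 := fun h => hs (by linear_combination -h)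
    rw [hf, div_eq_iff (mul_ne_zero hs' hD0)]
    field_simp
    linear_combination -(s * (p - 1 - v) + (p - 1) * (v + k₁)) * hss
      - p * (1 - p + s) * X * hND
  have hg2 : g = X ^ 2 - k₃ * X / (q * p) := by
    rw [hg]
    field_simp
    linear_combination k₂ * (1 + s) * (-e8) + hss + (1 + s) * X * e5 - p * X * e1 - p * X * (1 + s) * e4
  rw [hg2, hf2]
  field_simp
  ring
end

section
/- (Theorem 2, q-Painlevé V equation) Assume the ladder system with k₃ = 0 and k₁ < 1, set p = √(1 - k₁) and x_n = (1 + r_n)/p. Then for every n ≥ 1 satisfying the nondegeneracy conditions and D_n := r_{n-1}(qⁿ - 1 - r_n) + (qⁿ - 1)(r_n + k₁) ≠ 0, the sequence x_n satisfies the q-Painlevé V equation with α = β = γ = δ = 1/p, written with cleared denominators as (x_n x_{n-1} - 1)(x_n x_{n+1} - 1)(x_n - qⁿ/p)² = (q^{2n}/p²)(x_n - 1/p)²(x_n - p)². -/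
/-- Theorem 2 (q-Painlevé V): if k₃ = 0 and k₁ < 1, then x_n = (1 + r_n)/p with
p = √(1-k₁) satisfies qP_V with α = β = γ = δ = 1/p, in cleared-denominator form. -/
theorem ladder_qPainleveV (q k₁ k₂ k₃ : ℝ) (a b r R : ℕ → ℝ)
    (hq0 : 0 < q) (hq1 : q < 1)
    (hk1 : k₁ ≠ 0) (hk2 : k₂ ≠ 0)
    (ha0 : a 0 = 0) (hr0 : r 0 = 0)
    (hcomp1 : ∀ n : ℕ, r (n + 1) + r n = -(b n * R n) - k₁)
    (hcomp2 : ∀ n : ℕ,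
      R n - k₂ * b n / q ^ n - k₃ - (1 - q) * ∑ j ∈ Finset.range (n + 1), R j = 0)
    (hcomp30 : a 1 ^ 2 * R 1 = -(b 0 * (r 1 - r 0)))
    (hcomp3 : ∀ n : ℕ,
      a (n + 2) ^ 2 * R (n + 2) - a (n + 1) ^ 2 * R n =
        -(b (n + 1) * (r (n + 2) - r (n + 1))))
    (hcomp4 : ∀ n : ℕ,
      k₂ * a (n + 1) ^ 2 - k₂ * q ^ 2 * a n ^ 2 =
        q ^ (1 + n) - q ^ (2 + n) - q ^ (2 + n) * r n + q ^ (1 + n) * r (n + 1))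
    (hk3 : k₃ = 0) (hk1lt : k₁ < 1)
    (p : ℝ) (hp : p = Real.sqrt (1 - k₁))
    (x : ℕ → ℝ) (hx : ∀ m : ℕ, x m = (1 + r m) / p) :
    ∀ n : ℕ, R (n + 1) ≠ 0 → R n ≠ 0 →
      1 - q ^ (n + 1) + r (n + 1) ≠ 0 → 1 - q ^ (n + 2) + r (n + 2) ≠ 0 →
      r n * (q ^ (n + 1) - 1 - r (n + 1)) + (q ^ (n + 1) - 1) * (r (n + 1) + k₁) ≠ 0 →
      (x (n + 1) * x n - 1) * (x (n + 1) * x (n + 2) - 1) *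
          (x (n + 1) - q ^ (n + 1) / p) ^ 2 =
        q ^ (2 * (n + 1)) / p ^ 2 * (x (n + 1) - 1 / p) ^ 2 * (x (n + 1) - p) ^ 2 := by
  subst hk3
  have hq : q ≠ 0 := hq0.ne'
  have E2 : ∀ n : ℕ, k₂ * a n ^ 2 = q ^ n * (1 - q ^ n + r n) := by
    intro n
    induction n with
    | zero => simp [ha0, hr0]
    | succ m ih =>
      have h := hcomp4 m
      have e1 : q ^ (1 + m) = q * q ^ m := by ring
      have e2 : q ^ (2 + m) = q ^ 2 * q ^ m := by ring
      have e3 : q ^ (m + 1) = q * q ^ m := by ring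
      rw [e1, e2] at h
      rw [e3]
      linear_combination h + q ^ 2 * ih
  have E1 : ∀ n : ℕ, a (n + 1) ^ 2 * R (n + 1) * R n = r (n + 1) * (r (n + 1) + k₁) := by
    intro n
    induction n with
    | zero =>
      have h := hcomp1 0
      simp only [zero_add, hr0] at h ⊢
      rw [hr0] at hcomp30
      linear_combination R 0 * hcomp30 - r 1 * h
    | succ m ih =>
      have h := hcomp1 (m + 1)
      have h3 := hcomp3 m
      simp only [add_assoc, Nat.reduceAdd] at h h3 ih ⊢
      linear_combination R (m + 1) * h3 + ih - (r (m + 2) - r (m + 1)) * h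
  have B : ∀ n : ℕ, k₂ * (b (n + 1) - q * b n) = q ^ (n + 1) * (q * R (n + 1) - R n) := by
    intro n
    have h1 := hcomp2 (n + 1)
    have h0 := hcomp2 n
    rw [Finset.sum_range_succ] at h1
    have hd : R (n + 1) - R n - k₂ * b (n + 1) / q ^ (n + 1) + k₂ * b n / q ^ n
        = (1 - q) * R (n + 1) := by linear_combination h1 - h0
    have hP : q ^ n ≠ 0 := pow_ne_zero _ hq
    rw [pow_succ] at hd ⊢
    field_simp at hd
    linear_combination -hd
  have b0 : k₂ * b 0 = q * R 0 := by
    have h := hcomp2 0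
    simp at h
    linear_combination -h
  have W : ∀ n : ℕ, k₂ * a (n + 1) ^ 2 * R (n + 1) + (1 + r (n + 1)) * (k₂ * b n)
      = q * (q ^ n) ^ 2 * R n := by
    intro n
    induction n with
    | zero =>
      rw [hr0] at hcomp30
      simp only [zero_add, pow_zero]
      linear_combination k₂ * hcomp30 + b0
    | succ m ih =>
      have h3 := hcomp3 m
      have hB := B m
      have h2 := E2 (m + 1)
      rw [pow_succ] at hB h2 ⊢
      simp only [add_assoc, Nat.reduceAdd] at *
      linear_combination k₂ * h3 + (1 + r (m + 1)) * hB + q * ih + (R m - q * R (m + 1)) * h2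
  have U : ∀ n : ℕ, k₂ * ((1 + r (n + 1)) * (1 + r n) - (1 - k₁)) =
      -(q * (q ^ n) ^ 2 * R n ^ 2) := by
    intro n
    linear_combination k₂ * (1 + r (n + 1)) * hcomp1 n - R n * W n + k₂ * E1 n
  intro n _ _ _ _ _
  have hpp : p ^ 2 = 1 - k₁ := by rw [hp]; exact Real.sq_sqrt (by linarith)
  have hp0 : p ≠ 0 := by
    rw [hp]; exact (Real.sqrt_pos.mpr (by linarith)).ne'
  have U1 := U n
  have U2 := U (n + 1)
  have h1 := E1 n
  have h2 := E2 (n + 1)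
  have e : q ^ (2 * (n + 1)) = (q * q ^ n) ^ 2 := by ring
  have e' : q ^ (n + 1) = q * q ^ n := by ring
  simp only [add_assoc, Nat.reduceAdd] at U1 U2 h1 h2
  rw [hx, hx, hx, e, e']
  rw [e'] at U2 h2
  rw [← hpp] at U1 U2
  have hk : k₁ = 1 - p ^ 2 := by linarith
  rw [hk] at h1
  generalize q ^ n = P at *
  generalize r (n + 1) = s at *
  generalize r (n + 2) = t at *
  generalize r n = w at *
  generalize R (n + 1) = Y at *
  generalize R n = Z at *
  generalize a (n + 1) ^ 2 = A at *
  have key : ((1 + s) * (1 + w) - p ^ 2) * ((1 + t) * (1 + s) - p ^ 2) * (1 + s - q * P) ^ 2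
      = (q * P) ^ 2 * s ^ 2 * (1 + s - p ^ 2) ^ 2 := by
    have h4 : k₂ * (s * (s + (1 - p ^ 2))) = q * P * (1 - q * P + s) * Y * Z := by
      rw [← h1, ← h2]; ring
    apply mul_left_cancel₀ (pow_ne_zero 2 hk2)
    calc _ = (k₂ * ((1 + s) * (1 + w) - p ^ 2)) * (k₂ * ((1 + t) * (1 + s) - p ^ 2))
          * (1 + s - q * P) ^ 2 := by ring
      _ = (q * P) ^ 2 * (q * P * (1 - q * P + s) * Y * Z) ^ 2 := by rw [U1, U2]; ring
      _ = _ := by rw [← h4]; ring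
  have l : ((1 + s) / p * ((1 + w) / p) - 1) * ((1 + s) / p * ((1 + t) / p) - 1) *
      ((1 + s) / p - q * P / p) ^ 2 = (((1 + s) * (1 + w) - p ^ 2) * ((1 + t) * (1 + s) - p ^ 2)
        * (1 + s - q * P) ^ 2) / p ^ 6 := by
    field_simp
    try ring
  rw [l, key]
  field_simp
  try ring
end

section
/- (Theorem 2, expression for b_n) Assume the ladder system with k₃ = 0 and k₁ < 1, set p = √(1 - k₁) and x_n = (1 + r_n)/p. Then for every n ≥ 1 satisfying the nondegeneracy conditions, D_n := r_{n-1}(qⁿ - 1 - r_n) + (qⁿ - 1)(r_n + k₁) ≠ 0, and x_n x_{n+1} ≠ 1, one has b_n² = -q^{2n+1}(p x_n + p x_{n+1} - 1 - p²)² / (k₂ p² (x_n x_{n+1} - 1)). -/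
/-- Theorem 2, expression for b_n: if k₃ = 0 and k₁ < 1 then
b_n² = -q^{2n+1}(p x_n + p x_{n+1} - 1 - p²)² / (k₂ p² (x_n x_{n+1} - 1)). -/
theorem ladder_bn_sq (q k₁ k₂ k₃ : ℝ) (a b r R : ℕ → ℝ)
    (hq0 : 0 < q) (hq1 : q < 1)
    (hk1 : k₁ ≠ 0) (hk2 : k₂ ≠ 0)
    (ha0 : a 0 = 0) (hr0 : r 0 = 0)
    (hcomp1 : ∀ n : ℕ, r (n + 1) + r n = -(b n * R n) - k₁)
    (hcomp2 : ∀ n : ℕ,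
      R n - k₂ * b n / q ^ n - k₃ - (1 - q) * ∑ j ∈ Finset.range (n + 1), R j = 0)
    (hcomp30 : a 1 ^ 2 * R 1 = -(b 0 * (r 1 - r 0)))
    (hcomp3 : ∀ n : ℕ,
      a (n + 2) ^ 2 * R (n + 2) - a (n + 1) ^ 2 * R n =
        -(b (n + 1) * (r (n + 2) - r (n + 1))))
    (hcomp4 : ∀ n : ℕ,
      k₂ * a (n + 1) ^ 2 - k₂ * q ^ 2 * a n ^ 2 =
        q ^ (1 + n) - q ^ (2 + n) - q ^ (2 + n) * r n + q ^ (1 + n) * r (n + 1))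
    (hk3 : k₃ = 0) (hk1lt : k₁ < 1)
    (p : ℝ) (hp : p = Real.sqrt (1 - k₁))
    (x : ℕ → ℝ) (hx : ∀ m : ℕ, x m = (1 + r m) / p) :
    ∀ n : ℕ, R (n + 1) ≠ 0 → R n ≠ 0 →
      1 - q ^ (n + 1) + r (n + 1) ≠ 0 → 1 - q ^ (n + 2) + r (n + 2) ≠ 0 →
      r n * (q ^ (n + 1) - 1 - r (n + 1)) + (q ^ (n + 1) - 1) * (r (n + 1) + k₁) ≠ 0 →
      x (n + 1) * x (n + 2) ≠ 1 →
      b (n + 1) ^ 2 =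
        -(q ^ (2 * n + 3)) * (p * x (n + 1) + p * x (n + 2) - 1 - p ^ 2) ^ 2 /
          (k₂ * p ^ 2 * (x (n + 1) * x (n + 2) - 1)) := by
  subst hk3
  have L1 : ∀ n, k₂ * a n ^ 2 = q ^ n * (1 - q ^ n + r n) := by
    intro n
    induction n with
    | zero => simp [ha0, hr0]
    | succ n ih =>
      have h := hcomp4 n
      rw [pow_add, pow_add] at h
      rw [pow_succ]
      linear_combination h + q ^ 2 * ih
  have hrec : ∀ n, k₂ * b (n + 1) = q ^ (n + 1) * (q * R (n + 1) - R n) + q * (k₂ * b n) := by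
    intro n
    have h1 := hcomp2 (n + 1)
    have h0 := hcomp2 n
    rw [Finset.sum_range_succ] at h1
    have hqn : q ^ n ≠ 0 := pow_ne_zero _ hq0.ne'
    have e1 : k₂ * b (n + 1) / q ^ (n + 1) * q ^ (n + 1) = k₂ * b (n + 1) :=
      div_mul_cancel₀ _ (pow_ne_zero _ hq0.ne')
    have e0 : k₂ * b n / q ^ n * q ^ n = k₂ * b n := div_mul_cancel₀ _ hqn
    rw [← e1]
    have e0' : q * (k₂ * b n) = k₂ * b n / q ^ n * q ^ (n + 1) := by
      rw [pow_succ]; linear_combination -q * e0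
    rw [e0']
    linear_combination q ^ (n + 1) * (h0 - h1)
  have hG0 : q * R 0 = k₂ * b 0 := by
    have h := hcomp2 0
    simp at h
    linear_combination h
  have hG : ∀ n, k₂ * a (n + 1) ^ 2 * R n + k₂ * (1 + r (n + 1)) * b (n + 1)
      = q ^ (2 * n + 3) * R (n + 1) := by
    intro n
    have hexp : q ^ (2 * n + 3) = q * (q ^ (n + 1)) ^ 2 := by ring
    induction n with
    | zero =>
      have h1 := L1 1
      have h2 := hrec 0
      simp only [zero_add] at *
      rw [hexp]
      rw [hr0] at hcomp30
      linear_combination (1 + r 1) * h2 + (R 0 - q * R 1) * h1 + q * k₂ * hcomp30 - q * hG0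
    | succ n ih =>
      have ih := ih (by ring)
      have h1 := L1 (n + 2)
      have h2 := hrec (n + 1)
      have h3 := hcomp3 n
      have e' : q * q ^ (2 * n + 3) = (q ^ (n + 2)) ^ 2 := by ring
      simp only [add_assoc, Nat.reduceAdd] at *
      rw [hexp]
      linear_combination (1 + r (n + 2)) * h2 + (R (n + 1) - q * R (n + 2)) * h1 + q * k₂ * h3 + q * ih + R (n + 1) * e'
  have L2 : ∀ n, a (n + 1) ^ 2 * R (n + 1) * R n = r (n + 1) * (r (n + 1) + k₁) := by
    intro n
    induction n with
    | zero =>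
      have h := hcomp1 0
      simp only [zero_add] at *
      rw [hr0] at h hcomp30
      linear_combination R 0 * hcomp30 - r 1 * h
    | succ n ih =>
      have h := hcomp1 (n + 1)
      have h3 := hcomp3 n
      simp only [add_assoc, Nat.reduceAdd] at *
      linear_combination R (n + 1) * h3 + ih - (r (n + 2) - r (n + 1)) * h
  intro n _ _ _ _ _ hxx
  have hp2 : p ^ 2 = 1 - k₁ := by rw [hp]; exact Real.sq_sqrt (by linarith)
  have hp0 : p ≠ 0 := by rintro rfl; norm_num at hp2; linarith
  have h := hcomp1 (n + 1)
  have g := hG n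
  have l := L2 n
  have x1 : p * x (n + 1) = 1 + r (n + 1) := by rw [hx]; field_simp
  have x2 : p * x (n + 2) = 1 + r (n + 2) := by rw [hx]; field_simp
  have hE : k₂ * p ^ 2 * (x (n + 1) * x (n + 2) - 1) = -(q ^ (2 * n + 3) * R (n + 1) ^ 2) := by
    have : k₂ * p ^ 2 * (x (n + 1) * x (n + 2) - 1)
      = k₂ * ((p * x (n + 1)) * (p * x (n + 2)) - p ^ 2) := by ring
    rw [this, x1, x2, hp2]
    simp only [add_assoc, Nat.reduceAdd] at *
    linear_combination k₂ * (1 + r (n + 1)) * h - R (n + 1) * g + k₂ * l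
  rw [eq_div_iff (mul_ne_zero (mul_ne_zero hk2 (pow_ne_zero _ hp0)) (sub_ne_zero.mpr hxx)), hE, x1, x2, hp2]
  have hs : 1 + r (n + 1) + (1 + r (n + 2)) - 1 - (1 - k₁) = -(b (n + 1) * R (n + 1)) := by
    simp only [add_assoc, Nat.reduceAdd] at *
    linear_combination h
  rw [hs]; ring
end

section
/- Let q ∈ (0,1), α > 0, c ∈ ℝ, and let w(x) = x^α (qx; q)_∞ (cqx; q)_∞ for x > 0. Then at every x > 0 with w(qx) ≠ 0, the potential relation -u(qx) w(qx) = (w(x) - w(qx))/(x(1-q)) holds with u(y) = (1/(1-q)) (q/y - q^{1-α}/y + q^{1-α}(1+c) - c q^{1-α} y); that is, u is of the form u(y) = k₁ q/((1-q)y) + (k₂ y + k₃)/(1-q) with k₁ = 1 - q^{-α}, k₂ = -c q^{1-α}, and k₃ = (1+c) q^{1-α}. -/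
/-- For w(x) = x^α (qx;q)_∞ (cqx;q)_∞ on x > 0, the potential relation
-u(qx) w(qx) = (w(x) - w(qx))/(x(1-q)) holds with
u(y) = k₁q/((1-q)y) + (k₂y + k₃)/(1-q), k₁ = 1 - q^{-α}, k₂ = -cq^{1-α},
k₃ = (1+c)q^{1-α}. -/
theorem little_qLaguerre_potential (q α c : ℝ) (w u : ℝ → ℝ)
    (hq0 : 0 < q) (hq1 : q < 1) (hα : 0 < α)
    (hw : ∀ x : ℝ, 0 < x →
      w x = x ^ α * ∏' k : ℕ, ((1 - q ^ (k + 1) * x) * (1 - c * q ^ (k + 1) * x)))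
    (hu : ∀ y : ℝ, y ≠ 0 →
      u y = (1 - q ^ (-α)) * q / ((1 - q) * y) +
        ((-(c * q ^ (1 - α))) * y + (1 + c) * q ^ (1 - α)) / (1 - q)) :
    ∀ x : ℝ, 0 < x → w (q * x) ≠ 0 →
      -u (q * x) * w (q * x) = (w x - w (q * x)) / (x * (1 - q)) := by
  intro x hx _
  have hm : ∀ a : ℝ, Multipliable (fun k : ℕ => 1 - a * q ^ k) := by
    intro a
    have hs : Summable (fun k : ℕ => -(a * q ^ k)) :=
      ((summable_geometric_of_lt_one hq0.le hq1).mul_left a).neg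
    have := Real.multipliable_one_add_of_summable hs
    simpa only [sub_eq_add_neg] using this
  have hP : ∏' k : ℕ, ((1 - q ^ (k + 1) * x) * (1 - c * q ^ (k + 1) * x)) =
      ((1 - q * x) * (1 - c * q * x)) *
      ∏' k : ℕ, ((1 - q ^ (k + 1) * (q * x)) * (1 - c * q ^ (k + 1) * (q * x))) := by
    rw [tprod_eq_zero_mul']
    · congr 1
      · ring
      · apply tprod_congr
        intro k
        ring
    · refine ((hm (q ^ 2 * x)).mul (hm (c * q ^ 2 * x))).congr ?_
      intro k
      ring
  rw [hu _ (by positivity), hw x hx, hw (q * x) (by positivity), hP,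
    Real.mul_rpow hq0.le hx.le, Real.rpow_sub hq0, Real.rpow_neg hq0.le, Real.rpow_one]
  have h1 : 1 - q ≠ 0 := by linarith
  have h2 : q ^ α ≠ 0 := (Real.rpow_pos_of_pos hq0 α).ne'
  generalize ∏' k : ℕ, ((1 - q ^ (k + 1) * (q * x)) * (1 - c * q ^ (k + 1) * (q * x))) = P
  generalize x ^ α = X
  generalize q ^ α = Q at *
  field_simp
  ring
end

section
/- (Example 1, case c = -1) Assume the ladder system with parameters k₁ = 1 - q^{-α}, k₂ = q^{1-α}, k₃ = 0, where α > 0. Then for every n ≥ 1 satisfying the nondegeneracy conditions and D_n := r_{n-1}(qⁿ - 1 - r_n) + (qⁿ - 1)(r_n + k₁) ≠ 0, the sequence r_n satisfies r_n² (r_n + 1 - q^{-α})² = q^{-2n} (r_n + 1 - qⁿ)² ((r_n + 1)(r_{n+1} + 1) - q^{-α}) ((r_n + 1)(r_{n-1} + 1) - q^{-α}). -/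
/-- Example 1 with c = -1: under the ladder system with k₁ = 1 - q^{-α},
k₂ = q^{1-α}, k₃ = 0 (α > 0), the sequence r_n satisfies
r_n²(r_n+1-q^{-α})² = q^{-2n}(r_n+1-qⁿ)²((r_n+1)(r_{n+1}+1)-q^{-α})((r_n+1)(r_{n-1}+1)-q^{-α}). -/
theorem ladder_example1_rn_equation (q k₁ k₂ k₃ α : ℝ) (a b r R : ℕ → ℝ)
    (hα : 0 < α)
    (hk1def : k₁ = 1 - q ^ (-α)) (hk2def : k₂ = q ^ (1 - α)) (hk3def : k₃ = 0)
    (hq0 : 0 < q) (hq1 : q < 1)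
    (hk1 : k₁ ≠ 0) (hk2 : k₂ ≠ 0)
    (ha0 : a 0 = 0) (hr0 : r 0 = 0)
    (hcomp1 : ∀ n : ℕ, r (n + 1) + r n = -(b n * R n) - k₁)
    (hcomp2 : ∀ n : ℕ,
      R n - k₂ * b n / q ^ n - k₃ - (1 - q) * ∑ j ∈ Finset.range (n + 1), R j = 0)
    (hcomp30 : a 1 ^ 2 * R 1 = -(b 0 * (r 1 - r 0)))
    (hcomp3 : ∀ n : ℕ,
      a (n + 2) ^ 2 * R (n + 2) - a (n + 1) ^ 2 * R n =
        -(b (n + 1) * (r (n + 2) - r (n + 1))))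
    (hcomp4 : ∀ n : ℕ,
      k₂ * a (n + 1) ^ 2 - k₂ * q ^ 2 * a n ^ 2 =
        q ^ (1 + n) - q ^ (2 + n) - q ^ (2 + n) * r n + q ^ (1 + n) * r (n + 1)) :
    ∀ n : ℕ, R (n + 1) ≠ 0 → R n ≠ 0 →
      1 - q ^ (n + 1) + r (n + 1) ≠ 0 → 1 - q ^ (n + 2) + r (n + 2) ≠ 0 →
      r n * (q ^ (n + 1) - 1 - r (n + 1)) + (q ^ (n + 1) - 1) * (r (n + 1) + k₁) ≠ 0 →
      r (n + 1) ^ 2 * (r (n + 1) + 1 - q ^ (-α)) ^ 2 =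
        1 / q ^ (2 * n + 2) * (r (n + 1) + 1 - q ^ (n + 1)) ^ 2 *
          ((r (n + 1) + 1) * (r (n + 2) + 1) - q ^ (-α)) *
          ((r (n + 1) + 1) * (r n + 1) - q ^ (-α)) := by
  have hsq : ∀ n : ℕ, k₂ * a n ^ 2 = q ^ n * (1 - q ^ n + r n) := by
    intro n
    induction n with
    | zero => simp [ha0, hr0]
    | succ n ih =>
      have h := hcomp4 n
      have e : k₂ * a (n + 1) ^ 2 = q ^ 2 * (k₂ * a n ^ 2) + (q ^ (1 + n) - q ^ (2 + n)
        - q ^ (2 + n) * r n + q ^ (1 + n) * r (n + 1)) := by linarith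
      rw [e, ih]; ring
  have hA : ∀ n : ℕ, a (n + 1) ^ 2 * R (n + 1) * R n = r (n + 1) ^ 2 + k₁ * r (n + 1) := by
    intro n
    induction n with
    | zero =>
      have h := hcomp1 0
      simp only [zero_add, hr0] at h hcomp30 ⊢
      linear_combination R 0 * hcomp30 - r 1 * h
    | succ n ih =>
      have h := hcomp1 (n + 1)
      have h3 := hcomp3 n
      simp only [add_assoc, Nat.reduceAdd] at h ih ⊢
      linear_combination R (n + 1) * h3 + ih - (r (n + 2) - r (n + 1)) * h
  have hB : ∀ n : ℕ, q ^ (n + 1) * (q * R (n + 1) - R n) = k₂ * (b (n + 1) - q * b n) := by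
    intro n
    have h0 := hcomp2 n
    have h1 := hcomp2 (n + 1)
    rw [Finset.sum_range_succ] at h1
    have hq : q ^ n ≠ 0 := pow_ne_zero _ hq0.ne'
    have e0 : k₂ * b n / q ^ n * q ^ n = k₂ * b n := by field_simp
    have e1 : k₂ * b (n + 1) / q ^ (n + 1) * q ^ (n + 1) = k₂ * b (n + 1) := by field_simp
    linear_combination q ^ (n + 1) * (h1 - h0) + e1 - q * e0
  have hJ : ∀ n : ℕ, q ^ (2 * n + 1) * R n - q ^ (n + 1) * (1 - q ^ (n + 1) + r (n + 1)) * R (n + 1)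
      = k₂ * b n * (1 + r (n + 1)) := by
    intro n
    induction n with
    | zero =>
      have h := hcomp2 0
      have h2 := hsq 1
      simp [hk3def, hr0] at h hcomp30 h2 ⊢
      linear_combination h - k₂ * hcomp30 + R 1 * h2
    | succ n ih =>
      have h3 := hcomp3 n
      have s1 := hsq (n + 1)
      have s2 := hsq (n + 2)
      have hb := hB n
      simp only [add_assoc, Nat.reduceAdd] at ih ⊢
      linear_combination q * ih + (1 + r (n + 1)) * hb - k₂ * h3 + R (n + 2) * s2 - R n * s1
  intro n _ _ _ _ _
  have hq : q ^ n ≠ 0 := pow_ne_zero _ hq0.ne'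
  have hI : ∀ n : ℕ, q ^ (2 * n + 1) * R n ^ 2 =
      - k₂ * ((r (n + 1) + 1) * (r n + 1) - q ^ (-α)) := by
    intro n
    linear_combination R n * hJ n + k₂ * hA n - R (n + 1) * R n * hsq (n + 1)
      + k₂ * (1 + r (n + 1)) * hcomp1 n - k₂ * hk1def
  have i0 := hI n
  have i1 := hI (n + 1)
  have A := hA n
  have s1 := hsq (n + 1)
  have A2 : q ^ (n + 1) * (1 - q ^ (n + 1) + r (n + 1)) * (R (n + 1) * R n) =
      k₂ * (r (n + 1) * (r (n + 1) + 1 - q ^ (-α))) := by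
    rw [← s1]; linear_combination k₂ * A + k₂ * r (n + 1) * hk1def
  simp only [add_assoc, Nat.reduceAdd] at i1
  generalize q ^ (-α) = c at *
  have M : (k₂ * k₂) * (r (n + 1) ^ 2 * (r (n + 1) + 1 - c) ^ 2 * q ^ (2 * n + 2)) =
      (k₂ * k₂) * ((r (n + 1) + 1 - q ^ (n + 1)) ^ 2 *
          ((r (n + 1) + 1) * (r (n + 2) + 1) - c) * ((r (n + 1) + 1) * (r n + 1) - c)) := by
    have P : (q ^ (2 * n + 1) * R n ^ 2) * (q ^ (2 * (n + 1) + 1) * R (n + 1) ^ 2) =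
       (- k₂ * ((r (n + 1) + 1) * (r n + 1) - c)) *
       (- k₂ * ((r (n + 2) + 1) * (r (n + 1) + 1) - c)) := by rw [i0, ← i1]
    have Q := congrArg (· ^ 2) A2
    linear_combination (r (n + 1) + 1 - q ^ (n + 1)) ^ 2 * P - q ^ (2 * n + 2) * Q
  have M' := mul_left_cancel₀ (mul_ne_zero hk2 hk2) M
  have hq2 : q ^ (2 * n + 2) ≠ 0 := pow_ne_zero _ hq0.ne'
  rw [one_div, mul_assoc, mul_assoc, ← div_eq_inv_mul, eq_div_iff hq2, M']
  ring
end

section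
/- Let q ∈ (0,1), α > 0, c₁ < 0, c₂ < 0, and define for x > 0 the weight w(x) = x^α (qx; q)_∞ (c₁/x; q)_∞ (qx/c₁; q)_∞ / (c₂/x; q)_∞ (all infinite products converge, and the denominator is nonzero since c₂ < 0 and x > 0). Then for every x > 0, w(x/q) = (q^{-α}/c₁)(x - 1)(x - c₂) w(x); consequently the associated potential is of the form u(y) = k₁ q/((1-q)y) + (k₂ y + k₃)/(1-q) with k₁ = 1 - (c₂/c₁) q^{-α}, k₂ = -q^{1-α}/c₁, and k₃ = (c₂ + 1) q^{1-α}/c₁. -/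
lemma qp_step (q a : ℝ) (hq0 : 0 < q) (hq1 : q < 1) :
    (∏' k : ℕ, (1 - a * q ^ k)) = (1 - a) * ∏' k : ℕ, (1 - (a * q) * q ^ k) := by
  have hm : Multipliable (fun k : ℕ => 1 - (a * q) * q ^ k) := by
    have hs : Summable (fun k : ℕ => -((a * q) * q ^ k)) :=
      ((summable_geometric_of_lt_one hq0.le hq1).mul_left (a * q)).neg
    simpa [sub_eq_add_neg] using Real.multipliable_one_add_of_summable hs
  have e : (fun k : ℕ => 1 - (a * q) * q ^ k) = fun k : ℕ => 1 - a * q ^ (k + 1) := by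
    funext k; ring
  rw [e] at hm ⊢
  have := tprod_eq_zero_mul' (f := fun k : ℕ => 1 - a * q ^ k) hm
  simpa using this


/-- Example 2 weight w(x) = x^α (qx;q)_∞ (c₁/x;q)_∞ (qx/c₁;q)_∞ / (c₂/x;q)_∞:
one has w(x/q) = (q^{-α}/c₁)(x-1)(x-c₂) w(x) for x > 0, and consequently the
potential relation holds with k₁ = 1 - (c₂/c₁)q^{-α}, k₂ = -q^{1-α}/c₁,
k₃ = (c₂+1)q^{1-α}/c₁. -/
theorem example2_weight_ratio_and_potential (q α c₁ c₂ : ℝ) (w : ℝ → ℝ)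
    (hq0 : 0 < q) (hq1 : q < 1) (hα : 0 < α) (hc1 : c₁ < 0) (hc2 : c₂ < 0)
    (hw : ∀ x : ℝ, 0 < x →
      w x = x ^ α * (∏' k : ℕ, (1 - q ^ (k + 1) * x)) *
          (∏' k : ℕ, (1 - c₁ / x * q ^ k)) * (∏' k : ℕ, (1 - q * x / c₁ * q ^ k)) /
          ∏' k : ℕ, (1 - c₂ / x * q ^ k)) :
    (∀ x : ℝ, 0 < x → w (x / q) = q ^ (-α) / c₁ * ((x - 1) * (x - c₂)) * w x) ∧
      ∀ x : ℝ, 0 < x →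
        -((1 - c₂ / c₁ * q ^ (-α)) * q / ((1 - q) * (q * x)) +
              ((-(q ^ (1 - α) / c₁)) * (q * x) + (c₂ + 1) * q ^ (1 - α) / c₁) / (1 - q)) *
            w (q * x) =
          (w x - w (q * x)) / (x * (1 - q)) := by
  have key : ∀ x : ℝ, 0 < x → w (x / q) = q ^ (-α) / c₁ * ((x - 1) * (x - c₂)) * w x := by
    intro x hx
    have hxc1 : x - c₁ ≠ 0 := by linarith
    have hxc2 : x - c₂ ≠ 0 := by linarith
    have hx0 : x ≠ 0 := hx.ne'
    have hc10 : c₁ ≠ 0 := hc1.ne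
    have hqn : q ≠ 0 := hq0.ne'
    have a1 : (∏' k : ℕ, (1 - q ^ (k + 1) * (x / q))) = ∏' k : ℕ, (1 - x * q ^ k) := by
      congr 1; funext k; field_simp; ring
    have a2 : (∏' k : ℕ, (1 - q ^ (k + 1) * x)) = ∏' k : ℕ, (1 - (x * q) * q ^ k) := by
      congr 1; funext k; ring
    have b1 : c₁ / (x / q) = c₁ / x * q := by field_simp
    have b2 : c₂ / (x / q) = c₂ / x * q := by field_simp
    have b3 : q * (x / q) / c₁ = x / c₁ := by field_simp
    have b4 : q * x / c₁ = x / c₁ * q := by ring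
    have b5 : (x / q) ^ α = x ^ α * q ^ (-α) := by
      rw [Real.div_rpow hx.le hq0.le, Real.rpow_neg hq0.le]; rfl
    rw [hw x hx, hw (x / q) (div_pos hx hq0), a1, a2, b1, b2, b3, b4, b5,
      qp_step q x hq0 hq1, qp_step q (c₁ / x) hq0 hq1, qp_step q (x / c₁) hq0 hq1,
      qp_step q (c₂ / x) hq0 hq1]
    generalize (∏' k : ℕ, (1 - c₂ / x * q * q ^ k)) = D
    generalize (∏' k : ℕ, (1 - c₁ / x * q * q ^ k)) = P1
    generalize (∏' k : ℕ, (1 - x / c₁ * q * q ^ k)) = P2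
    generalize (∏' k : ℕ, (1 - x * q * q ^ k)) = P3
    have d2 : 1 - c₂ / x = (x - c₂) / x := by field_simp
    have d1 : 1 - c₁ / x = (x - c₁) / x := by field_simp
    have d3 : 1 - x / c₁ = -(x - c₁) / c₁ := by field_simp; ring
    rw [d1, d2, d3]
    by_cases hD : D = 0
    · simp [hD]
    · field_simp
      ring
  refine ⟨key, ?_⟩
  intro x hx
  have h := key (q * x) (mul_pos hq0 hx)
  have e : q * x / q = x := by field_simp
  have e2 : q ^ (1 - α) = q * q ^ (-α) := by
    rw [sub_eq_add_neg, Real.rpow_add hq0, Real.rpow_one]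
  rw [e] at h
  rw [h, e2]
  have h1q : 1 - q ≠ 0 := by linarith
  have hx0 : x ≠ 0 := hx.ne'
  have hc10 : c₁ ≠ 0 := hc1.ne
  have hqn : q ≠ 0 := hq0.ne'
  generalize q ^ (-α) = A
  generalize w (q * x) = W
  field_simp
  ring
end

section
/- Let q ∈ (0,1), α > 0, c₁ < 0, c₂ < 0 with |c₁/c₂| q^{α+k+1} < 1, and k ∈ ℕ. Then the k-th moment of the weight w(x) = x^α (qx; q)_∞ (c₁/x; q)_∞ (qx/c₁; q)_∞ / (c₂/x; q)_∞ on the lattice {qⁿ : n ∈ ℕ} satisfies μ_k := (1-q) Σ_{n=0}^{∞} q^{n(k+1)} w(qⁿ) = (1-q) (q; q)_∞ (q/c₁; q)_∞ ((c₁; q)_∞/(c₂; q)_∞) Σ_{ℓ=0}^{∞} ((c₁/c₂) q^{α+1+k})^ℓ / ((q/c₂; q)_ℓ (q; q)_ℓ), where both series converge absolutely; the right-hand sum is ₂φ₁(0, 0; q/c₂; q; (c₁/c₂) q^{α+1+k}). -/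
lemma aux_P (q a : ℝ) (hq0 : 0 < q) (hq1 : q < 1) :
    ∏' j : ℕ, (1 - a * q ^ j) = (1 - a) * ∏' j : ℕ, (1 - (a * q) * q ^ j) := by
  have hm : Multipliable (fun j : ℕ => (1 - (a * q) * q ^ j)) := by
    have : Summable (fun j : ℕ => ‖-((a * q) * q ^ j)‖) := by
      simp only [norm_neg, norm_mul, norm_pow]
      refine Summable.mul_left _ (summable_geometric_of_lt_one (norm_nonneg _) ?_)
      rwa [Real.norm_of_nonneg hq0.le]
    simpa [sub_eq_add_neg] using multipliable_one_add_of_summable this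
  have h := tprod_eq_zero_mul' (f := fun j : ℕ => (1 - a * q ^ j))
    (by convert hm using 2 with j; ring)
  rw [h]
  simp only [pow_zero, mul_one]
  congr 2
  ext j
  ring

lemma aux_term (q α c₁ c₂ : ℝ) (k : ℕ)
    (hq0 : 0 < q) (hq1 : q < 1) (hc1 : c₁ < 0) (hc2 : c₂ < 0) (n : ℕ) :
    q ^ (n * (k + 1)) *
        (q ^ ((n : ℝ) * α) * (∏' j : ℕ, (1 - q ^ (n + 1) * q ^ j)) *
          (∏' j : ℕ, (1 - c₁ / q ^ n * q ^ j)) * (∏' j : ℕ, (1 - q ^ (n + 1) / c₁ * q ^ j)) /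
          ∏' j : ℕ, (1 - c₂ / q ^ n * q ^ j)) =
    ((∏' j : ℕ, (1 - q * q ^ j)) * (∏' j : ℕ, (1 - q / c₁ * q ^ j)) *
        ((∏' j : ℕ, (1 - c₁ * q ^ j)) / ∏' j : ℕ, (1 - c₂ * q ^ j))) *
     ((c₁ / c₂ * q ^ (α + 1 + (k : ℝ))) ^ n /
        ((∏ i ∈ Finset.range n, (1 - q / c₂ * q ^ i)) *
          ∏ i ∈ Finset.range n, (1 - q * q ^ i))) := by
  induction n with
  | zero => simp; ring
  | succ n ih =>
    have hqn : 0 < q ^ n := by positivity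
    have hqn1 : q ^ (n + 1) < 1 := pow_lt_one₀ hq0.le hq1 (by omega)
    have e1 := aux_P q (q ^ (n + 1)) hq0 hq1
    have e2 := aux_P q (c₁ / q ^ (n + 1)) hq0 hq1
    have e3 := aux_P q (q ^ (n + 1) / c₁) hq0 hq1
    have e4 := aux_P q (c₂ / q ^ (n + 1)) hq0 hq1
    rw [show c₁ / q ^ (n + 1) * q = c₁ / q ^ n by field_simp; ring] at e2
    rw [show c₂ / q ^ (n + 1) * q = c₂ / q ^ n by field_simp; ring] at e4
    rw [show q ^ (n + 1) * q = q ^ (n + 1 + 1) by ring] at e1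
    rw [show q ^ (n + 1) / c₁ * q = q ^ (n + 1 + 1) / c₁ by ring] at e3
    rw [Finset.prod_range_succ, Finset.prod_range_succ, pow_succ (c₁ / c₂ * _)]
    have d1 : (1 - q ^ (n + 1)) ≠ 0 := by linarith
    have d3 : (1 - q ^ (n + 1) / c₁) ≠ 0 := by
      have : q ^ (n + 1) / c₁ < 0 := div_neg_of_pos_of_neg (by positivity) hc1
      linarith
    have d4 : (1 - q ^ (n + 1) / c₂) ≠ 0 := by
      have : q ^ (n + 1) / c₂ < 0 := div_neg_of_pos_of_neg (by positivity) hc2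
      linarith
    have hz : q ^ (α + 1 + (k : ℝ)) = q ^ α * q ^ (k + 1) := by
      rw [add_assoc, Real.rpow_add hq0, ← Real.rpow_natCast q (k + 1)]
      push_cast; ring_nf
    have ha : q ^ (((n + 1 : ℕ) : ℝ) * α) = q ^ ((n : ℝ) * α) * q ^ α := by
      rw [← Real.rpow_add hq0]; push_cast; ring_nf
    have hk : q ^ ((n + 1) * (k + 1)) = q ^ (n * (k + 1)) * q ^ (k + 1) := by
      rw [← pow_add]; ring_nf
    have f1 := eq_div_of_mul_eq d1 ((mul_comm _ _).trans e1.symm)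
    have f3 := eq_div_of_mul_eq d3 ((mul_comm _ _).trans e3.symm)
    rw [f1, f3, e2, e4, ha, hk]
    have g2 : 1 - c₁ / q ^ (n + 1) = -(c₁ / q ^ (n + 1)) * (1 - q ^ (n + 1) / c₁) := by
      field_simp [hc1.ne]; ring
    have g4 : 1 - c₂ / q ^ (n + 1) = -(c₂ / q ^ (n + 1)) * (1 - q ^ (n + 1) / c₂) := by
      field_simp [hc2.ne]; ring
    rw [g2, g4, show q / c₂ * q ^ n = q ^ (n + 1) / c₂ by ring,
      show q * q ^ n = q ^ (n + 1) by ring]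
    generalize (1 - q ^ (n + 1)) = D1 at *
    generalize (1 - q ^ (n + 1) / c₁) = D3 at *
    generalize (1 - q ^ (n + 1) / c₂) = D4 at *
    have hq' : q ^ (n + 1) ≠ 0 := by positivity
    have hc1' := hc1.ne
    have hc2' := hc2.ne
    set A := ∏' j : ℕ, (1 - q ^ (n + 1) * q ^ j)
    set B := ∏' j : ℕ, (1 - c₁ / q ^ n * q ^ j)
    set C := ∏' j : ℕ, (1 - q ^ (n + 1) / c₁ * q ^ j)
    set E := ∏' j : ℕ, (1 - c₂ / q ^ n * q ^ j)
    generalize q ^ (n + 1) = Q at *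
    calc _ = (q ^ (n * (k + 1)) * (q ^ ((n : ℝ) * α) * A * B * C / E)) *
          (c₁ / c₂ * (q ^ α * q ^ (k + 1)) / (D4 * D1)) := by
          rw [show -(c₁ / Q) * D3 * B = (c₁ / Q * B) * (-1) * D3 by ring]
          have : (-(c₂ / Q) * D4 * E)⁻¹ = -(Q / c₂) * D4⁻¹ * E⁻¹ := by
            rw [mul_inv, mul_inv, inv_neg, inv_div]
          rw [div_eq_mul_inv _ (-(c₂ / Q) * D4 * E), this, div_eq_mul_inv _ E]
          generalize E⁻¹ = E'
          field_simp
      _ = _ := by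
          rw [ih, ← hz, mul_assoc, div_mul_div_comm]; congr 2; ring

/-- The k-th moment of the Example 2 weight on the lattice {qⁿ}:
(1-q) Σₙ q^{n(k+1)} w(qⁿ)
  = (1-q)(q;q)_∞(q/c₁;q)_∞ ((c₁;q)_∞/(c₂;q)_∞) ₂φ₁(0,0;q/c₂;q;(c₁/c₂)q^{α+1+k}),
both series converging absolutely. -/
theorem example2_moments (q α c₁ c₂ : ℝ) (k : ℕ)
    (hq0 : 0 < q) (hq1 : q < 1) (hα : 0 < α) (hc1 : c₁ < 0) (hc2 : c₂ < 0)
    (hz : |c₁ / c₂| * q ^ (α + (k : ℝ) + 1) < 1) :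
    Summable (fun n : ℕ => q ^ (n * (k + 1)) *
        (q ^ ((n : ℝ) * α) * (∏' j : ℕ, (1 - q ^ (n + 1) * q ^ j)) *
          (∏' j : ℕ, (1 - c₁ / q ^ n * q ^ j)) * (∏' j : ℕ, (1 - q ^ (n + 1) / c₁ * q ^ j)) /
          ∏' j : ℕ, (1 - c₂ / q ^ n * q ^ j))) ∧
    Summable (fun l : ℕ => (c₁ / c₂ * q ^ (α + 1 + (k : ℝ))) ^ l /
        ((∏ i ∈ Finset.range l, (1 - q / c₂ * q ^ i)) *
          ∏ i ∈ Finset.range l, (1 - q * q ^ i))) ∧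
    (1 - q) * ∑' n : ℕ, q ^ (n * (k + 1)) *
        (q ^ ((n : ℝ) * α) * (∏' j : ℕ, (1 - q ^ (n + 1) * q ^ j)) *
          (∏' j : ℕ, (1 - c₁ / q ^ n * q ^ j)) * (∏' j : ℕ, (1 - q ^ (n + 1) / c₁ * q ^ j)) /
          ∏' j : ℕ, (1 - c₂ / q ^ n * q ^ j)) =
      (1 - q) * (∏' j : ℕ, (1 - q * q ^ j)) * (∏' j : ℕ, (1 - q / c₁ * q ^ j)) *
        ((∏' j : ℕ, (1 - c₁ * q ^ j)) / ∏' j : ℕ, (1 - c₂ * q ^ j)) *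
        ∑' l : ℕ, (c₁ / c₂ * q ^ (α + 1 + (k : ℝ))) ^ l /
          ((∏ i ∈ Finset.range l, (1 - q / c₂ * q ^ i)) *
            ∏ i ∈ Finset.range l, (1 - q * q ^ i)) := by
  have hqp : 0 < q ^ (α + 1 + (k : ℝ)) := Real.rpow_pos_of_pos hq0 _
  have hcc : 0 < c₁ / c₂ := div_pos_of_neg_of_neg hc1 hc2
  have hz1 : c₁ / c₂ * q ^ (α + 1 + (k : ℝ)) < 1 := by
    rw [abs_of_pos hcc] at hz
    rwa [show α + 1 + (k : ℝ) = α + k + 1 by ring]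
  have hz0 : 0 < c₁ / c₂ * q ^ (α + 1 + (k : ℝ)) := mul_pos hcc hqp
  have hS : Summable (fun l : ℕ => (c₁ / c₂ * q ^ (α + 1 + (k : ℝ))) ^ l /
        ((∏ i ∈ Finset.range l, (1 - q / c₂ * q ^ i)) *
          ∏ i ∈ Finset.range l, (1 - q * q ^ i))) := by
    generalize c₁ / c₂ * q ^ (α + 1 + (k : ℝ)) = z at *
    have p1 : ∀ i : ℕ, 0 < 1 - q / c₂ * q ^ i := fun i => by
      have : q / c₂ * q ^ i < 0 :=
        mul_neg_of_neg_of_pos (div_neg_of_pos_of_neg hq0 hc2) (by positivity)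
      linarith
    have p2 : ∀ i : ℕ, 0 < 1 - q * q ^ i := fun i => by
      have : q ^ (i + 1) < 1 := pow_lt_one₀ hq0.le hq1 (by omega)
      rw [pow_succ'] at this
      linarith
    have P1 : ∀ l : ℕ, 0 < ∏ i ∈ Finset.range l, (1 - q / c₂ * q ^ i) :=
      fun l => Finset.prod_pos fun i _ => p1 i
    have P2 : ∀ l : ℕ, 0 < ∏ i ∈ Finset.range l, (1 - q * q ^ i) :=
      fun l => Finset.prod_pos fun i _ => p2 i
    refine summable_of_ratio_test_tendsto_lt_one hz1 (Filter.Eventually.of_forall fun l => ?_) ?_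
    · exact (div_pos (pow_pos hz0 l) (mul_pos (P1 l) (P2 l))).ne'
    · have ht : Filter.Tendsto (fun n : ℕ => z / ((1 - q / c₂ * q ^ n) * (1 - q * q ^ n)))
          Filter.atTop (nhds (z / ((1 - q / c₂ * 0) * (1 - q * 0)))) := by
        have h0 := tendsto_pow_atTop_nhds_zero_of_lt_one hq0.le hq1
        refine Filter.Tendsto.div tendsto_const_nhds (((h0.const_mul _).const_sub _).mul
          ((h0.const_mul _).const_sub _)) (by simp)
      simp only [mul_zero, sub_zero, mul_one, div_one] at ht
      refine ht.congr fun n => ?_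
      rw [Real.norm_of_nonneg (div_pos (pow_pos hz0 _) (mul_pos (P1 _) (P2 _))).le,
        Real.norm_of_nonneg (div_pos (pow_pos hz0 _) (mul_pos (P1 _) (P2 _))).le,
        Finset.prod_range_succ, Finset.prod_range_succ, pow_succ]
      have := (P1 n).ne'
      have := (P2 n).ne'
      have := (p1 n).ne'
      have := (p2 n).ne'
      generalize (1 - q / c₂ * q ^ n) = a at *
      generalize (1 - q * q ^ n) = b at *
      generalize (∏ i ∈ Finset.range n, (1 - q / c₂ * q ^ i)) = a' at *
      generalize (∏ i ∈ Finset.range n, (1 - q * q ^ i)) = b' at *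
      field_simp
  refine ⟨?_, hS, ?_⟩
  · simp only [aux_term q α c₁ c₂ k hq0 hq1 hc1 hc2]
    exact hS.mul_left _
  · simp only [aux_term q α c₁ c₂ k hq0 hq1 hc1 hc2]
    rw [tsum_mul_left]
    ring
end

section
/- (Example 2, case c₂ = -1) Assume the ladder system with parameters k₁ = 1 + q^{-α}/c₁, k₂ = -q^{1-α}/c₁, k₃ = 0, where α > 0, c₁ < 0 and c₁ ≠ -q^{-α} (so that k₁ ≠ 0). Set x_n = √(-c₁) q^{α/2} (1 + r_n). Then a_n² = -c₁ q^{n+α-1}(1 - qⁿ + r_n) for all n ≥ 0, and for every n ≥ 1 satisfying the nondegeneracy conditions and D_n := r_{n-1}(qⁿ - 1 - r_n) + (qⁿ - 1)(r_n + k₁) ≠ 0, x_n satisfies the q-Painlevé V equation with all four parameters equal to √(-c₁) q^{α/2}, written with cleared denominators as (x_n x_{n-1} - 1)(x_n x_{n+1} - 1)(x_n - √(-c₁) q^{n+α/2})² = (-c₁) q^{2n+α} (x_n - √(-c₁) q^{α/2})² (x_n - 1/(√(-c₁) q^{α/2}))². -/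
/-- Algebraic core of the ladder system, with `k₂ = q t`, `k₁ = 1 - t`. -/
theorem ladder_core (q t : ℝ) (A b r R : ℕ → ℝ) (hq0 : 0 < q) (ht : t ≠ 0)
    (hA0 : A 0 = 0) (hr0 : r 0 = 0)
    (h1 : ∀ n : ℕ, r (n + 1) + r n = -(b n * R n) - (1 - t))
    (h2 : ∀ n : ℕ,
      R n - q * t * b n / q ^ n - 0 - (1 - q) * ∑ j ∈ Finset.range (n + 1), R j = 0)
    (h30 : A 1 * R 1 = -(b 0 * (r 1 - r 0)))
    (h3 : ∀ n : ℕ, A (n + 2) * R (n + 2) - A (n + 1) * R n =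
        -(b (n + 1) * (r (n + 2) - r (n + 1))))
    (h4 : ∀ n : ℕ, q * t * A (n + 1) - q * t * q ^ 2 * A n =
        q ^ (1 + n) - q ^ (2 + n) - q ^ (2 + n) * r n + q ^ (1 + n) * r (n + 1)) :
    (∀ n : ℕ, q * t * A n = q ^ n * (1 - q ^ n + r n)) ∧
    ∀ n : ℕ, (t - (1 + r (n + 1)) * (1 + r n)) * (t - (1 + r (n + 1)) * (1 + r (n + 2))) *
      (1 + r (n + 1) - q ^ (n + 1)) ^ 2 =
      (q ^ (n + 1)) ^ 2 * r (n + 1) ^ 2 * (r (n + 1) + (1 - t)) ^ 2 := by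
  have hA : ∀ n : ℕ, q * t * A n = q ^ n * (1 - q ^ n + r n) := by
    intro n
    induction n with
    | zero => simp [hA0, hr0]
    | succ n ih =>
      have e := h4 n
      simp only [pow_add, pow_one] at e ⊢
      linear_combination e + q ^ 2 * ih
  refine ⟨hA, ?_⟩
  have hP : ∀ n : ℕ, A (n + 1) * R (n + 1) * R n = r (n + 1) * (r (n + 1) + (1 - t)) := by
    intro n
    induction n with
    | zero =>
      have e := h1 0
      simp only [zero_add, hr0] at e h30 ⊢
      linear_combination R 0 * h30 - r 1 * e
    | succ n ih =>
      linear_combination R (n + 1) * h3 n + ih - (r (n + 2) - r (n + 1)) * h1 (n + 1)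
  have hb : ∀ n : ℕ, q * t * b n =
      q ^ n * (R n - (1 - q) * ∑ j ∈ Finset.range (n + 1), R j) := by
    intro n
    have e := h2 n
    have hqn : q ^ n ≠ 0 := by positivity
    field_simp at e
    linear_combination -e
  have hL : ∀ n : ℕ, (1 + r (n + 1)) *
      (q * R (n + 1) + R n - (1 - q) * ∑ j ∈ Finset.range (n + 1), R j) =
      q ^ (n + 1) * (q * R (n + 1) + R n) := by
    intro n
    induction n with
    | zero =>
      have e1 := hb 0
      have e2 := hA 1
      simp [hr0] at e1 e2 h30 ⊢
      linear_combination q * t * h30 - R 1 * e2 - r 1 * e1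
    | succ n ih =>
      have e1 := hb (n + 1)
      have e2 := hA (n + 1)
      have e3 := hA (n + 2)
      have e4 := h3 n
      have hqn : q ^ (n + 1) ≠ 0 := by positivity
      rw [Finset.sum_range_succ _ (n + 1)] at e1 ⊢
      generalize (∑ j ∈ Finset.range (n + 1), R j) = S at *
      apply mul_left_cancel₀ hqn
      have hq2 : q ^ (n + 2) = q * q ^ (n + 1) := by ring
      simp only [show n + 1 + 1 = n + 2 from rfl] at *
      rw [hq2] at e3
      rw [hq2]
      clear hq2
      generalize q ^ (n + 1) = Q at *
      linear_combination q * t * e4 - R (n + 2) * e3 + R n * e2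
        - (r (n + 2) - r (n + 1)) * e1 + Q * ih
  intro n
  have e1 := hb n
  have e2 := hb (n + 1)
  have eA := hA (n + 1)
  have eP := hP n
  have eL := hL n
  have eG := h1 n
  have eG' := h1 (n + 1)
  rw [Finset.sum_range_succ _ (n + 1)] at e2
  generalize (∑ j ∈ Finset.range (n + 1), R j) = S at *
  simp only [show n + 1 + 1 = n + 2 from rfl] at *
  have hq2 : q ^ (n + 1) = q * q ^ n := by ring
  rw [hq2] at e2 eA eL
  rw [hq2]
  clear hq2
  have hqn : q ^ n ≠ 0 := by positivity
  generalize q ^ n = Q at *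
  generalize R (n + 1) = R' at *
  generalize R n = R₀ at *
  generalize A (n + 1) = A' at *
  generalize r (n + 2) = z at *
  generalize r (n + 1) = y at *
  generalize r n = w at *
  generalize b (n + 1) = b' at *
  generalize b n = b₀ at *
  have hq : q ≠ 0 := hq0.ne'
  obtain rfl : b₀ = Q * (R₀ - (1 - q) * S) / (q * t) := by
    field_simp; linear_combination e1
  obtain rfl : b' = Q * (R' - (1 - q) * (S + R')) / t := by
    field_simp; apply mul_left_cancel₀ hq; linear_combination e2
  obtain rfl : A' = Q * (1 - q * Q + y) / t := by
    field_simp; apply mul_left_cancel₀ hq; linear_combination eA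
  clear e1 e2 eA
  field_simp at eP eG eG'
  have E1 : t * (t - (1 + y) * (1 + w)) = Q ^ 2 * R₀ ^ 2 := by
    apply mul_left_cancel₀ hq
    linear_combination Q * R₀ * eL - q * eP - (1 + y) * eG
  have E2 : t * (t - (1 + y) * (1 + z)) = q ^ 2 * Q ^ 2 * R' ^ 2 := by
    linear_combination Q * R' * eL - eP - (1 + y) * eG'
  have ht2 : t ^ 2 ≠ 0 := by positivity
  apply mul_left_cancel₀ ht2
  linear_combination (t * (t - (1 + y) * (1 + z)) * (1 + y - q * Q) ^ 2) * E1
    + Q ^ 2 * R₀ ^ 2 * (1 + y - q * Q) ^ 2 * E2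
    + q ^ 2 * Q ^ 2 * (Q * (1 - q * Q + y) * R' * R₀ + t * y * (y + (1 - t))) * eP

/-- Example 2 with c₂ = -1: under the ladder system with k₁ = 1 + q^{-α}/c₁,
k₂ = -q^{1-α}/c₁, k₃ = 0, the variable x_n = √(-c₁) q^{α/2}(1 + r_n) satisfies
a_n² = -c₁ q^{n+α-1}(1 - qⁿ + r_n) and the q-Painlevé V equation with all four
parameters equal to √(-c₁) q^{α/2} (cleared-denominator form). -/
theorem ladder_example2_qPainleveV (q k₁ k₂ k₃ α c₁ : ℝ) (a b r R : ℕ → ℝ)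
    (hα : 0 < α) (hc1 : c₁ < 0) (hc1' : c₁ ≠ -q ^ (-α))
    (hk1def : k₁ = 1 + q ^ (-α) / c₁) (hk2def : k₂ = -q ^ (1 - α) / c₁) (hk3def : k₃ = 0)
    (hq0 : 0 < q) (hq1 : q < 1)
    (hk1 : k₁ ≠ 0) (hk2 : k₂ ≠ 0)
    (ha0 : a 0 = 0) (hr0 : r 0 = 0)
    (hcomp1 : ∀ n : ℕ, r (n + 1) + r n = -(b n * R n) - k₁)
    (hcomp2 : ∀ n : ℕ,
      R n - k₂ * b n / q ^ n - k₃ - (1 - q) * ∑ j ∈ Finset.range (n + 1), R j = 0)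
    (hcomp30 : a 1 ^ 2 * R 1 = -(b 0 * (r 1 - r 0)))
    (hcomp3 : ∀ n : ℕ,
      a (n + 2) ^ 2 * R (n + 2) - a (n + 1) ^ 2 * R n =
        -(b (n + 1) * (r (n + 2) - r (n + 1))))
    (hcomp4 : ∀ n : ℕ,
      k₂ * a (n + 1) ^ 2 - k₂ * q ^ 2 * a n ^ 2 =
        q ^ (1 + n) - q ^ (2 + n) - q ^ (2 + n) * r n + q ^ (1 + n) * r (n + 1))
    (x : ℕ → ℝ) (hx : ∀ m : ℕ, x m = Real.sqrt (-c₁) * q ^ (α / 2) * (1 + r m)) :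
    (∀ n : ℕ, a n ^ 2 = -c₁ * q ^ ((n : ℝ) + α - 1) * (1 - q ^ n + r n)) ∧
      ∀ n : ℕ, R (n + 1) ≠ 0 → R n ≠ 0 →
        1 - q ^ (n + 1) + r (n + 1) ≠ 0 → 1 - q ^ (n + 2) + r (n + 2) ≠ 0 →
        r n * (q ^ (n + 1) - 1 - r (n + 1)) + (q ^ (n + 1) - 1) * (r (n + 1) + k₁) ≠ 0 →
        (x (n + 1) * x n - 1) * (x (n + 1) * x (n + 2) - 1) *
            (x (n + 1) - Real.sqrt (-c₁) * q ^ ((n : ℝ) + 1 + α / 2)) ^ 2 =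
          -c₁ * q ^ (2 * (n : ℝ) + 2 + α) *
            (x (n + 1) - Real.sqrt (-c₁) * q ^ (α / 2)) ^ 2 *
            (x (n + 1) - 1 / (Real.sqrt (-c₁) * q ^ (α / 2))) ^ 2 := by
  subst hk3def
  have hs : 0 < Real.sqrt (-c₁) * q ^ (α / 2) := by
    have : 0 < Real.sqrt (-c₁) := Real.sqrt_pos.mpr (by linarith)
    positivity
  have hqa : 0 < q ^ α := by positivity
  have hs2 : (Real.sqrt (-c₁) * q ^ (α / 2)) ^ 2 = -c₁ * q ^ α := by
    rw [mul_pow, Real.sq_sqrt (by linarith), ← Real.rpow_natCast (q ^ (α / 2)),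
      ← Real.rpow_mul hq0.le]
    norm_num
  have hcne : c₁ ≠ 0 := hc1.ne
  obtain ⟨t, ht⟩ : ∃ t, t = 1 / (-c₁ * q ^ α) := ⟨_, rfl⟩
  have hden : 0 < -c₁ * q ^ α := mul_pos (by linarith) hqa
  have htpos : 0 < t := by rw [ht]; positivity
  have hk1t : k₁ = 1 - t := by
    rw [hk1def, ht, Real.rpow_neg hq0.le]; field_simp; ring
  have hk2t : k₂ = q * t := by
    rw [hk2def, ht, Real.rpow_sub hq0, Real.rpow_one]; field_simp
  rw [hk1t] at hcomp1
  rw [hk2t] at hcomp2 hcomp4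
  obtain ⟨H1, H2⟩ := ladder_core q t (fun n => a n ^ 2) b r R hq0 htpos.ne' (by simp [ha0]) hr0
    hcomp1 hcomp2 hcomp30 hcomp3 hcomp4
  constructor
  · intro n
    have e := H1 n
    beta_reduce at e
    rw [Real.rpow_sub hq0, Real.rpow_add hq0, Real.rpow_natCast, Real.rpow_one]
    have h : q * t ≠ 0 := by positivity
    apply mul_left_cancel₀ h
    rw [e, ht]
    field_simp
  · intro n _ _ _ _ _
    have e := H2 n
    rw [hx, hx, hx]
    have p1 : q ^ ((n : ℝ) + 1 + α / 2) = q ^ (n + 1) * q ^ (α / 2) := by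
      rw [Real.rpow_add hq0, ← Real.rpow_natCast q (n + 1)]; push_cast; rfl
    have p2 : q ^ (2 * (n : ℝ) + 2 + α) = (q ^ (n + 1)) ^ 2 * q ^ α := by
      rw [Real.rpow_add hq0, ← pow_mul, ← Real.rpow_natCast q ((n + 1) * 2)]
      push_cast; ring_nf
    rw [p1, p2]
    have hts : t = 1 / (Real.sqrt (-c₁) * q ^ (α / 2)) ^ 2 := by rw [ht, hs2]
    have g1 : Real.sqrt (-c₁) * (q ^ (n + 1) * q ^ (α / 2))
        = Real.sqrt (-c₁) * q ^ (α / 2) * q ^ (n + 1) := by ring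
    have g2 : -c₁ * ((q ^ (n + 1)) ^ 2 * q ^ α)
        = (Real.sqrt (-c₁) * q ^ (α / 2)) ^ 2 * (q ^ (n + 1)) ^ 2 := by rw [hs2]; ring
    rw [g1, g2]
    generalize Real.sqrt (-c₁) * q ^ (α / 2) = s at *
    have hts' : t * s ^ 2 = 1 := by rw [hts]; field_simp
    have u1 : 1 / s = t * s := by rw [hts]; field_simp
    rw [u1]
    have v : ∀ u w : ℝ, s * (1 + u) * (s * (1 + w)) - 1 = -s ^ 2 * (t - (1 + u) * (1 + w)) := by
      intro u w; linear_combination hts'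
    rw [v, v]
    linear_combination s ^ 6 * e
end
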